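/- arXiv:1902.06074 — 2 statements merged into one kernel-verified Lean document; each statement's English description precedes it below -/
import Mathlib

section
/- Let (⊙, ⟨-,-⟩, ⦅-,-⦆) be a two-variable adjunction on 𝔸, 𝕊, 𝔹, where 𝔹 has pushouts and is complete, 𝔸 has pullbacks, and 𝕊 is cocomplete with pullbacks. Let (E_A, M_A) be a weak factorization system on 𝔸, and let 𝒮, ℬ be classes of morphisms in 𝕊 and 𝔹 respectively. If the Leibniz hom ⟪u,g⟫ belongs to M_A for every u ∈ 𝒮 and g ∈ ℬ, then ⟪u,g⟫ belongs to M_A for every u in the saturated closure 𝒮ˢ and every g in the cosaturated closure ˢℬ. -/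
/-!
The two-variable adjunction turns lifting problems into one another: for `f` in `𝔸`, `u` in `𝕊`
and `g` in `𝔹`, the three relations

  `f ⧄ ⟪u,g⟫`,  `(f ⋄ u) ⧄ g`,  `u ⧄ ⦅f,g⦆`

are equivalent (`THC.leibnizTensor_lifting_iff_leibnizHom` and
`THC.leibnizTensor_lifting_iff_leibnizCotensor`; both are instances of Mathlib's result on Leibniz
constructions for parametrized adjunctions). Since `M_A` is the class of maps with the right
lifting property against `E_A`, it suffices to fix `f ∈ E_A`.

For a fixed `p`, the class of maps with the left lifting property against `p` is saturated
(`isSaturated_lifting`), and dually the class of maps with the right lifting property against `p`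
is cosaturated (`isCosaturated_lifting`). Using the third form of the relation with
`p = ⦅f,g⦆` extends the hypothesis from `u ∈ 𝒮` to the saturated closure of `𝒮`; using the second
form with `p = f ⋄ u` then extends it from `g ∈ ℬ` to the cosaturated closure of `ℬ`.
-/

open CategoryTheory Category Limits Opposite

universe v₁ v₂ v₃ u₁ u₂ u₃

/-- A two-variable adjunction (`THC` situation) on categories `𝔸`, `𝕊`, `𝔹`:
functors `⊙ : 𝔸 × 𝕊 ⥤ 𝔹`, `⟨-,-⟩ : 𝕊ᵒᵖ × 𝔹 ⥤ 𝔸`, `⦅-,-⦆ : 𝔸ᵒᵖ × 𝔹 ⥤ 𝕊` (in curried form),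
together with bijections `𝔹(a ⊙ s, b) ≅ 𝔸(a, ⟨s,b⟩) ≅ 𝕊(s, ⦅a,b⦆)` natural in `a`, `s`, `b`. -/
structure THC (𝔸 : Type u₁) (𝕊 : Type u₂) (𝔹 : Type u₃)
    [Category.{v₁} 𝔸] [Category.{v₂} 𝕊] [Category.{v₃} 𝔹] where
  tensor : 𝔸 ⥤ 𝕊 ⥤ 𝔹
  hom : 𝕊ᵒᵖ ⥤ 𝔹 ⥤ 𝔸
  cotensor : 𝔸ᵒᵖ ⥤ 𝔹 ⥤ 𝕊
  homEquiv : ∀ (a : 𝔸) (s : 𝕊) (b : 𝔹),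
    ((tensor.obj a).obj s ⟶ b) ≃ (a ⟶ (hom.obj (op s)).obj b)
  cotensorEquiv : ∀ (a : 𝔸) (s : 𝕊) (b : 𝔹),
    ((tensor.obj a).obj s ⟶ b) ≃ (s ⟶ (cotensor.obj (op a)).obj b)
  homEquiv_naturality_left : ∀ {a a' : 𝔸} (h : a' ⟶ a) (s : 𝕊) (b : 𝔹)
    (φ : (tensor.obj a).obj s ⟶ b),
    homEquiv a' s b ((tensor.map h).app s ≫ φ) = h ≫ homEquiv a s b φ
  homEquiv_naturality_mid : ∀ (a : 𝔸) {s s' : 𝕊} (w : s ⟶ s') (b : 𝔹)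
    (φ : (tensor.obj a).obj s' ⟶ b),
    homEquiv a s b ((tensor.obj a).map w ≫ φ) = homEquiv a s' b φ ≫ (hom.map w.op).app b
  homEquiv_naturality_right : ∀ (a : 𝔸) (s : 𝕊) {b b' : 𝔹} (k : b ⟶ b')
    (φ : (tensor.obj a).obj s ⟶ b),
    homEquiv a s b' (φ ≫ k) = homEquiv a s b φ ≫ (hom.obj (op s)).map k
  cotensorEquiv_naturality_left : ∀ {a a' : 𝔸} (h : a' ⟶ a) (s : 𝕊) (b : 𝔹)
    (φ : (tensor.obj a).obj s ⟶ b),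
    cotensorEquiv a' s b ((tensor.map h).app s ≫ φ) =
      cotensorEquiv a s b φ ≫ (cotensor.map h.op).app b
  cotensorEquiv_naturality_mid : ∀ (a : 𝔸) {s s' : 𝕊} (w : s ⟶ s') (b : 𝔹)
    (φ : (tensor.obj a).obj s' ⟶ b),
    cotensorEquiv a s b ((tensor.obj a).map w ≫ φ) = w ≫ cotensorEquiv a s' b φ
  cotensorEquiv_naturality_right : ∀ (a : 𝔸) (s : 𝕊) {b b' : 𝔹} (k : b ⟶ b')
    (φ : (tensor.obj a).obj s ⟶ b),
    cotensorEquiv a s b' (φ ≫ k) = cotensorEquiv a s b φ ≫ (cotensor.obj (op a)).map k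

namespace THC

variable {𝔸 : Type u₁} {𝕊 : Type u₂} {𝔹 : Type u₃}
  [Category.{v₁} 𝔸] [Category.{v₂} 𝕊] [Category.{v₃} 𝔹]

/-- The Leibniz tensor (pushout-product) `f ⋄ u : (B ⊙ L) ⊔_{A⊙L} (A ⊙ K) ⟶ B ⊙ K`. -/
noncomputable def leibnizTensor (T : THC 𝔸 𝕊 𝔹) [HasPushouts 𝔹]
    {A B : 𝔸} (f : A ⟶ B) {L K : 𝕊} (u : L ⟶ K) :
    pushout ((T.tensor.map f).app L) ((T.tensor.obj A).map u) ⟶ (T.tensor.obj B).obj K :=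
  pushout.desc ((T.tensor.obj B).map u) ((T.tensor.map f).app K)
    ((T.tensor.map f).naturality u).symm

/-- The Leibniz hom `⟪u,g⟫ : ⟨K,X⟩ ⟶ ⟨L,X⟩ ×_{⟨L,Y⟩} ⟨K,Y⟩`. -/
noncomputable def leibnizHom (T : THC 𝔸 𝕊 𝔹) [HasPullbacks 𝔸]
    {L K : 𝕊} (u : L ⟶ K) {X Y : 𝔹} (g : X ⟶ Y) :
    (T.hom.obj (op K)).obj X ⟶
      pullback ((T.hom.obj (op L)).map g) ((T.hom.map u.op).app Y) :=
  pullback.lift ((T.hom.map u.op).app X) ((T.hom.obj (op K)).map g)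
    ((T.hom.map u.op).naturality g).symm

/-- The Leibniz cotensor `⦅f,g⦆ : ⦅B,X⦆ ⟶ ⦅A,X⦆ ×_{⦅A,Y⦆} ⦅B,Y⦆`. -/
noncomputable def leibnizCotensor (T : THC 𝔸 𝕊 𝔹) [HasPullbacks 𝕊]
    {A B : 𝔸} (f : A ⟶ B) {X Y : 𝔹} (g : X ⟶ Y) :
    (T.cotensor.obj (op B)).obj X ⟶
      pullback ((T.cotensor.obj (op A)).map g) ((T.cotensor.map f.op).app Y) :=
  pullback.lift ((T.cotensor.map f.op).app X) ((T.cotensor.obj (op B)).map g)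
    ((T.cotensor.map f.op).naturality g).symm

end THC
section Saturation

open CategoryTheory Category Limits

universe w v u

variable {C : Type u} [Category.{v} C]

/-- `f` is a retract of `g` in the arrow category: there are morphisms `i, r` between the
sources and `j, s` between the targets, commuting with `f` and `g`, with `i ≫ r = 𝟙` and
`j ≫ s = 𝟙`. -/
def IsRetractOfArrow {X Y Z W : C} (f : X ⟶ Y) (g : Z ⟶ W) : Prop :=
  ∃ (i : X ⟶ Z) (r : Z ⟶ X) (j : Y ⟶ W) (s : W ⟶ Y),
    i ≫ r = 𝟙 X ∧ j ≫ s = 𝟙 Y ∧ i ≫ g = f ≫ j ∧ g ≫ s = r ≫ f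

/-- The inclusion functor `Set.Iio j ⥤ J`. -/
def iioInclusion {J : Type w} [Preorder J] (j : J) : Set.Iio j ⥤ J :=
  Monotone.functor (f := fun i => (i : J)) (fun _ _ h => h)

/-- The cocone on the restriction of `F : J ⥤ C` to `Set.Iio j` whose point is `F.obj j`;
asking this cocone to be colimiting expresses that `F` is continuous at `j`. -/
@[simps]
def coconeAt {J : Type w} [Preorder J] (F : J ⥤ C) (j : J) :
    Cocone (iioInclusion j ⋙ F) where
  pt := F.obj j
  ι :=
    { app := fun i => F.map (homOfLE i.2.le)
      naturality := fun i i' h => by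
        dsimp [iioInclusion]
        rw [Category.comp_id, ← F.map_comp]
        rfl }

/-- A class of morphisms `W` is closed under transfinite composition if for every
well-ordered type `J` (with bottom element), every functor `F : J ⥤ C` which is
continuous at every limit element of `J` and sends every successor step into `W`,
and every colimit cocone on `F`, the transfinite composite `F.obj ⊥ ⟶ c.pt` lies
in `W`. -/
def ClosedUnderTransfiniteComposition (W : MorphismProperty C) : Prop :=
  ∀ (J : Type w) (_ : LinearOrder J) (_ : SuccOrder J) (_ : OrderBot J)
    (_ : WellFoundedLT J) (F : J ⥤ C) (c : Cocone F) (_ : IsColimit c),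
    (∀ j : J, ¬IsMax j → W (F.map (homOfLE (Order.le_succ j)))) →
    (∀ j : J, Order.IsSuccLimit j → Nonempty (IsColimit (coconeAt F j))) →
    W (c.ι.app ⊥)

/-- A class of morphisms is saturated if it contains all isomorphisms and is closed
under composition, retracts, pushouts (cobase change) and transfinite composition. -/
structure IsSaturated (W : MorphismProperty C) : Prop where
  of_isIso : ∀ {X Y : C} (f : X ⟶ Y), IsIso f → W f
  comp_mem : ∀ {X Y Z : C} (f : X ⟶ Y) (g : Y ⟶ Z), W f → W g → W (f ≫ g)
  retract_mem : ∀ {X Y Z Z' : C} (f : X ⟶ Y) (g : Z ⟶ Z'),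
    IsRetractOfArrow f g → W g → W f
  pushout_mem : ∀ {A A' B B' : C} (f : A ⟶ B) (t : A ⟶ A') (f' : A' ⟶ B') (b : B ⟶ B'),
    IsPushout t f f' b → W f → W f'
  transfinite : ClosedUnderTransfiniteComposition.{w} W

/-- A class of morphisms is cosaturated if the corresponding class in the opposite
category is saturated, i.e. it contains all isomorphisms and is closed under
composition, retracts, pullbacks (base change) and transfinite op-composition. -/
def IsCosaturated (W : MorphismProperty C) : Prop :=
  IsSaturated.{w} W.op

/-- The saturated closure (saturation) of a class of morphisms: the smallest saturated
class containing it. -/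
def saturation (A : MorphismProperty C) : MorphismProperty C :=
  fun _ _ f => ∀ W : MorphismProperty C, IsSaturated.{w} W → A ≤ W → W f

/-- The cosaturated closure (cosaturation) of a class of morphisms: the smallest
cosaturated class containing it. -/
def cosaturation (A : MorphismProperty C) : MorphismProperty C :=
  fun _ _ f => ∀ W : MorphismProperty C, IsCosaturated.{w} W → A ≤ W → W f

/-- A weak factorization system `(E, M)`: every morphism factors as a morphism of `E`
followed by a morphism of `M`, `E` is precisely the class of morphisms with the left
lifting property against `M`, and `M` is precisely the class of morphisms with the
right lifting property against `E`. -/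
structure IsWFS (E M : MorphismProperty C) : Prop where
  factor : ∀ {X Y : C} (f : X ⟶ Y),
    ∃ (Z : C) (e : X ⟶ Z) (m : Z ⟶ Y), E e ∧ M m ∧ e ≫ m = f
  left_iff : ∀ {X Y : C} (f : X ⟶ Y),
    E f ↔ ∀ {V W : C} (m : V ⟶ W), M m → HasLiftingProperty f m
  right_iff : ∀ {X Y : C} (m : X ⟶ Y),
    M m ↔ ∀ {V W : C} (e : V ⟶ W), E e → HasLiftingProperty e m

end Saturation

namespace THC

variable {𝔸 : Type u₁} {𝕊 : Type u₂} {𝔹 : Type u₃}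
  [Category.{v₁} 𝔸] [Category.{v₂} 𝕊] [Category.{v₃} 𝔹]

/-- The adjunctions `a ⊙ - ⊣ ⦅a,-⦆`, as an adjunction with parameter `a : 𝔸`. -/
def cotensorAdj (T : THC 𝔸 𝕊 𝔹) : T.tensor ⊣₂ T.cotensor :=
  ParametrizedAdjunction.mk'
    (fun a => Adjunction.mkOfHomEquiv
      { homEquiv := fun s b => T.cotensorEquiv a s b
        homEquiv_naturality_left_symm := fun w φ => by
          rw [Equiv.symm_apply_eq, T.cotensorEquiv_naturality_mid, Equiv.apply_symm_apply]
        homEquiv_naturality_right := fun φ k => T.cotensorEquiv_naturality_right _ _ k φ })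
    (fun f _ _ g => by simpa using T.cotensorEquiv_naturality_left f _ _ g)

/-- The adjunctions `- ⊙ s ⊣ ⟨s,-⟩`, as an adjunction with parameter `s : 𝕊`. -/
def homAdj (T : THC 𝔸 𝕊 𝔹) : T.tensor.flip ⊣₂ T.hom :=
  ParametrizedAdjunction.mk'
    (fun s => Adjunction.mkOfHomEquiv
      { homEquiv := fun a b => T.homEquiv a s b
        homEquiv_naturality_left_symm := fun w φ => by
          rw [Equiv.symm_apply_eq]
          exact ((T.homEquiv_naturality_left w _ _ _).trans (by simp)).symm
        homEquiv_naturality_right := fun φ k => T.homEquiv_naturality_right _ _ k φ })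
    (fun f _ _ g => by simpa using T.homEquiv_naturality_mid _ f _ g)

theorem leibnizTensor_lifting_iff_leibnizCotensor (T : THC 𝔸 𝕊 𝔹) [HasPushouts 𝔹] [HasPullbacks 𝕊]
    {A B : 𝔸} (f : A ⟶ B) {L K : 𝕊} (u : L ⟶ K) {X Y : 𝔹} (g : X ⟶ Y) :
    HasLiftingProperty (T.leibnizTensor f u) g ↔
      HasLiftingProperty u (T.leibnizCotensor f g) :=
  T.cotensorAdj.hasLiftingProperty_iff
    (.ofHasPushout T.tensor f u) (.ofHasPullback T.cotensor f g)

theorem leibnizTensor_lifting_iff_leibnizHom (T : THC 𝔸 𝕊 𝔹) [HasPushouts 𝔹] [HasPullbacks 𝔸]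
    {A B : 𝔸} (f : A ⟶ B) {L K : 𝕊} (u : L ⟶ K) {X Y : 𝔹} (g : X ⟶ Y) :
    HasLiftingProperty (T.leibnizTensor f u) g ↔
      HasLiftingProperty f (T.leibnizHom u g) :=
  T.homAdj.hasLiftingProperty_iff
    (Functor.PushoutObjObj.ofHasPushout T.tensor f u).flip (.ofHasPullback T.hom u g)

end THC

theorem isSaturated_lifting {C : Type*} [Category C] {X Y : C} (p : X ⟶ Y) :
    IsSaturated.{w} (fun _ _ f => HasLiftingProperty f p : MorphismProperty C) where
  of_isIso _ _ := inferInstance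
  comp_mem _ _ _ _ := inferInstance
  retract_mem f g := by
    rintro ⟨i, r, j, s, hir, hjs, hi, hr⟩ hg
    let R : RetractArrow f g :=
      { i := Arrow.homMk i j hi
        r := Arrow.homMk r s hr.symm
        retract := by ext <;> simpa }
    exact R.leftLiftingProperty p
  pushout_mem _ _ _ _ sq _ := sq.hasLiftingProperty p
  transfinite J _ _ _ _ F c hc hF hlim := by
    have : F.IsWellOrderContinuous := ⟨hlim⟩
    exact HasLiftingProperty.transfiniteComposition.hasLiftingProperty_ι_app_bot hc hF

theorem isCosaturated_lifting {C : Type*} [Category C] {X Y : C} (p : X ⟶ Y) :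
    IsCosaturated.{w} (fun _ _ g => HasLiftingProperty p g : MorphismProperty C) := by
  have : MorphismProperty.op (fun _ _ g => HasLiftingProperty p g : MorphismProperty C) =
      (fun _ _ f => HasLiftingProperty f p.op) := by
    ext A B f
    exact HasLiftingProperty.iff_op
  unfold IsCosaturated
  rw [this]
  exact isSaturated_lifting p.op

/-- Let `(E_A, M_A)` be a weak factorization system on `𝔸`. If the
Leibniz hom `⟪u,g⟫` belongs to `M_A` for all `u ∈ 𝒮` and `g ∈ ℬ`, then `⟪u,g⟫` belongs
to `M_A` for all `u` in the saturated closure `𝒮ˢ` and all `g` in the cosaturated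
closure `ˢℬ`. -/
theorem thc_wfs_saturation_hom {𝔸 : Type u₁} {𝕊 : Type u₂} {𝔹 : Type u₃}
    [Category.{v₁} 𝔸] [Category.{v₂} 𝕊] [Category.{v₃} 𝔹]
    (T : THC 𝔸 𝕊 𝔹) [HasPushouts 𝔹] [HasLimits 𝔹] [HasPullbacks 𝔸]
    [HasColimits 𝕊] [HasPullbacks 𝕊]
    (E_A M_A : MorphismProperty 𝔸) (hwfs : IsWFS E_A M_A)
    (𝒮 : MorphismProperty 𝕊) (ℬ : MorphismProperty 𝔹)
    (h : ∀ {L K : 𝕊} (u : L ⟶ K) {X Y : 𝔹} (g : X ⟶ Y),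
      𝒮 u → ℬ g → M_A (T.leibnizHom u g)) :
    ∀ {L K : 𝕊} (u : L ⟶ K) {X Y : 𝔹} (g : X ⟶ Y),
      saturation.{w₁} 𝒮 u → cosaturation.{w₂} ℬ g → M_A (T.leibnizHom u g) := by
  intro L K u X Y g hu hg
  rw [hwfs.right_iff]
  intro A B f hf
  rw [← T.leibnizTensor_lifting_iff_leibnizHom]
  refine hg _ (isCosaturated_lifting (T.leibnizTensor f u)) fun X Y g hg => ?_
  refine (T.leibnizTensor_lifting_iff_leibnizCotensor f u g).2 ?_
  refine hu _ (isSaturated_lifting (T.leibnizCotensor f g)) fun L K u hu => ?_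
  refine (T.leibnizTensor_lifting_iff_leibnizCotensor f u g).1 ?_
  rw [T.leibnizTensor_lifting_iff_leibnizHom]
  exact (hwfs.right_iff _).1 (h u g hu hg) f hf
end

section
/- Let (⊙, ⟨-,-⟩, ⦅-,-⦆) be a two-variable adjunction on 𝔸, 𝕊, 𝔹, where 𝔹 has pushouts and is complete, 𝕊 has pullbacks, and 𝔸 is cocomplete with pullbacks. Let (E_S, M_S) be a weak factorization system on 𝕊, and let 𝒜, ℬ be classes of morphisms in 𝔸 and 𝔹 respectively. If the Leibniz cotensor ⦅f,g⦆ belongs to M_S for every f ∈ 𝒜 and g ∈ ℬ, then ⦅f,g⦆ belongs to M_S for every f in the saturated closure 𝒜ˢ and every g in the cosaturated closure ˢℬ. -/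
/-!
The three Leibniz constructions are adjoint to each other: for `f : A ⟶ B` in `𝔸`, `e : L ⟶ K`
in `𝕊` and `g : X ⟶ Y` in `𝔹`, lifting `e` against `⦅f,g⦆`, lifting `f` against the Leibniz hom
`⟪e,g⟫`, and lifting the Leibniz tensor `f ⋄ e` against `g` are the same problem. The common
unwound form is `THC.CubeFillable`, stated only in terms of maps out of tensors.

Membership in `M_S` is the right lifting property against `E_S`. Fix `e ∈ E_S`. For `g ∈ ℬ`, the
maps `f` with the left lifting property against `⟪e,g⟫` form a saturated class containing `𝒜`,
hence containing its saturated closure. For a fixed such `f`, the maps `g` with the right lifting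
property against `f ⋄ e` form a cosaturated class containing `ℬ`, hence containing its
cosaturated closure. That the maps lifting on the left against a fixed `p` form a saturated class is
`isSaturated_hasLiftingProperty`, and the cosaturated case follows from it by duality.
-/

open CategoryTheory Category Limits Opposite

universe v₁ v₂ v₃ u₁ u₂ u₃

namespace THC

variable {𝔸 : Type u₁} {𝕊 : Type u₂} {𝔹 : Type u₃}
  [Category.{v₁} 𝔸] [Category.{v₂} 𝕊] [Category.{v₃} 𝔹]

/-- The lifting problem shared by the three Leibniz constructions: compatible maps `α` on `B ⊙ L`
and `β` on `A ⊙ K` into `X`, together with `γ : B ⊙ K ⟶ Y`, always admit a common filler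
`δ : B ⊙ K ⟶ X`. -/
def CubeFillable (T : THC 𝔸 𝕊 𝔹) {A B : 𝔸} (f : A ⟶ B) {L K : 𝕊} (e : L ⟶ K)
    {X Y : 𝔹} (g : X ⟶ Y) : Prop :=
  ∀ (α : (T.tensor.obj B).obj L ⟶ X) (β : (T.tensor.obj A).obj K ⟶ X)
    (γ : (T.tensor.obj B).obj K ⟶ Y),
    (T.tensor.map f).app L ≫ α = (T.tensor.obj A).map e ≫ β →
    α ≫ g = (T.tensor.obj B).map e ≫ γ →
    β ≫ g = (T.tensor.map f).app K ≫ γ →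
    ∃ δ : (T.tensor.obj B).obj K ⟶ X,
      (T.tensor.obj B).map e ≫ δ = α ∧ (T.tensor.map f).app K ≫ δ = β ∧ δ ≫ g = γ

lemma hasLiftingProperty_leibnizCotensor_iff (T : THC 𝔸 𝕊 𝔹) [HasPullbacks 𝕊]
    {A B : 𝔸} (f : A ⟶ B) {L K : 𝕊} (e : L ⟶ K) {X Y : 𝔹} (g : X ⟶ Y) :
    HasLiftingProperty e (T.leibnizCotensor f g) ↔ T.CubeFillable f e g := by
  constructor
  · intro hl α β γ h₁ h₂ h₃
    have hβγ : T.cotensorEquiv A K X β ≫ (T.cotensor.obj (op A)).map g =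
        T.cotensorEquiv B K Y γ ≫ (T.cotensor.map f.op).app Y := by
      rw [← T.cotensorEquiv_naturality_right, ← T.cotensorEquiv_naturality_left, h₃]
    have sq : CommSq (T.cotensorEquiv B L X α) e (T.leibnizCotensor f g)
        (pullback.lift (T.cotensorEquiv A K X β) (T.cotensorEquiv B K Y γ) hβγ) := by
      constructor
      unfold leibnizCotensor
      apply pullback.hom_ext
      · simp only [assoc, pullback.lift_fst]
        rw [← T.cotensorEquiv_naturality_left, ← T.cotensorEquiv_naturality_mid, h₁]
      · simp only [assoc, pullback.lift_snd]
        rw [← T.cotensorEquiv_naturality_right, ← T.cotensorEquiv_naturality_mid, h₂]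
    obtain ⟨δ, hδ⟩ := (T.cotensorEquiv B K X).surjective sq.lift
    have hr := sq.fac_right
    refine ⟨δ, (T.cotensorEquiv B L X).injective ?_, (T.cotensorEquiv A K X).injective ?_,
      (T.cotensorEquiv B K Y).injective ?_⟩
    · rw [T.cotensorEquiv_naturality_mid, hδ, sq.fac_left]
    · have := congrArg (fun t => t ≫ pullback.fst _ _) hr
      simp only [leibnizCotensor, assoc, pullback.lift_fst] at this
      rw [T.cotensorEquiv_naturality_left, hδ]
      exact this
    · have := congrArg (fun t => t ≫ pullback.snd _ _) hr
      simp only [leibnizCotensor, assoc, pullback.lift_snd] at this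
      rw [T.cotensorEquiv_naturality_right, hδ]
      exact this
  · intro hc
    refine ⟨fun {u v} sq => ?_⟩
    obtain ⟨α, hα⟩ := (T.cotensorEquiv B L X).surjective u
    obtain ⟨β, hβ⟩ := (T.cotensorEquiv A K X).surjective (v ≫ pullback.fst _ _)
    obtain ⟨γ, hγ⟩ := (T.cotensorEquiv B K Y).surjective (v ≫ pullback.snd _ _)
    have hf := congrArg (fun t => t ≫ pullback.fst _ _) sq.w
    have hs := congrArg (fun t => t ≫ pullback.snd _ _) sq.w
    simp only [leibnizCotensor, assoc, pullback.lift_fst] at hf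
    simp only [leibnizCotensor, assoc, pullback.lift_snd] at hs
    obtain ⟨δ, h₁, h₂, h₃⟩ := hc α β γ
      ((T.cotensorEquiv A L X).injective (by
        rw [T.cotensorEquiv_naturality_left, T.cotensorEquiv_naturality_mid, hα, hβ, hf]))
      ((T.cotensorEquiv B L Y).injective (by
        rw [T.cotensorEquiv_naturality_right, T.cotensorEquiv_naturality_mid, hα, hγ, hs]))
      ((T.cotensorEquiv A K Y).injective (by
        rw [T.cotensorEquiv_naturality_right, T.cotensorEquiv_naturality_left, hβ, hγ,
          assoc, assoc, pullback.condition]))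
    refine ⟨⟨⟨T.cotensorEquiv B K X δ, ?_, ?_⟩⟩⟩
    · rw [← T.cotensorEquiv_naturality_mid, h₁, hα]
    · unfold leibnizCotensor
      apply pullback.hom_ext
      · rw [assoc, pullback.lift_fst, ← T.cotensorEquiv_naturality_left, h₂, hβ]
      · rw [assoc, pullback.lift_snd, ← T.cotensorEquiv_naturality_right, h₃, hγ]

lemma hasLiftingProperty_leibnizHom_iff (T : THC 𝔸 𝕊 𝔹) [HasPullbacks 𝔸]
    {A B : 𝔸} (f : A ⟶ B) {L K : 𝕊} (e : L ⟶ K) {X Y : 𝔹} (g : X ⟶ Y) :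
    HasLiftingProperty f (T.leibnizHom e g) ↔ T.CubeFillable f e g := by
  constructor
  · intro hl α β γ h₁ h₂ h₃
    have hαγ : T.homEquiv B L X α ≫ (T.hom.obj (op L)).map g =
        T.homEquiv B K Y γ ≫ (T.hom.map e.op).app Y := by
      rw [← T.homEquiv_naturality_right, ← T.homEquiv_naturality_mid, h₂]
    have sq : CommSq (T.homEquiv A K X β) f (T.leibnizHom e g)
        (pullback.lift (T.homEquiv B L X α) (T.homEquiv B K Y γ) hαγ) := by
      constructor
      unfold leibnizHom
      apply pullback.hom_ext
      · simp only [assoc, pullback.lift_fst]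
        rw [← T.homEquiv_naturality_left, ← T.homEquiv_naturality_mid, h₁]
      · simp only [assoc, pullback.lift_snd]
        rw [← T.homEquiv_naturality_right, ← T.homEquiv_naturality_left, h₃]
    obtain ⟨δ, hδ⟩ := (T.homEquiv B K X).surjective sq.lift
    have hr := sq.fac_right
    refine ⟨δ, (T.homEquiv B L X).injective ?_, (T.homEquiv A K X).injective ?_,
      (T.homEquiv B K Y).injective ?_⟩
    · have := congrArg (fun t => t ≫ pullback.fst _ _) hr
      simp only [leibnizHom, assoc, pullback.lift_fst] at this
      rw [T.homEquiv_naturality_mid, hδ]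
      exact this
    · rw [T.homEquiv_naturality_left, hδ, sq.fac_left]
    · have := congrArg (fun t => t ≫ pullback.snd _ _) hr
      simp only [leibnizHom, assoc, pullback.lift_snd] at this
      rw [T.homEquiv_naturality_right, hδ]
      exact this
  · intro hc
    refine ⟨fun {u v} sq => ?_⟩
    obtain ⟨β, hβ⟩ := (T.homEquiv A K X).surjective u
    obtain ⟨α, hα⟩ := (T.homEquiv B L X).surjective (v ≫ pullback.fst _ _)
    obtain ⟨γ, hγ⟩ := (T.homEquiv B K Y).surjective (v ≫ pullback.snd _ _)
    have hf := congrArg (fun t => t ≫ pullback.fst _ _) sq.w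
    have hs := congrArg (fun t => t ≫ pullback.snd _ _) sq.w
    simp only [leibnizHom, assoc, pullback.lift_fst] at hf
    simp only [leibnizHom, assoc, pullback.lift_snd] at hs
    obtain ⟨δ, h₁, h₂, h₃⟩ := hc α β γ
      ((T.homEquiv A L X).injective (by
        rw [T.homEquiv_naturality_left, T.homEquiv_naturality_mid, hα, hβ, hf]))
      ((T.homEquiv B L Y).injective (by
        rw [T.homEquiv_naturality_right, T.homEquiv_naturality_mid, hα, hγ,
          assoc, assoc, pullback.condition]))
      ((T.homEquiv A K Y).injective (by
        rw [T.homEquiv_naturality_right, T.homEquiv_naturality_left, hβ, hγ, hs]))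
    refine ⟨⟨⟨T.homEquiv B K X δ, ?_, ?_⟩⟩⟩
    · rw [← T.homEquiv_naturality_left, h₂, hβ]
    · unfold leibnizHom
      apply pullback.hom_ext
      · rw [assoc, pullback.lift_fst, ← T.homEquiv_naturality_mid, h₁, hα]
      · rw [assoc, pullback.lift_snd, ← T.homEquiv_naturality_right, h₃, hγ]

lemma hasLiftingProperty_leibnizTensor_iff (T : THC 𝔸 𝕊 𝔹) [HasPushouts 𝔹]
    {A B : 𝔸} (f : A ⟶ B) {L K : 𝕊} (e : L ⟶ K) {X Y : 𝔹} (g : X ⟶ Y) :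
    HasLiftingProperty (T.leibnizTensor f e) g ↔ T.CubeFillable f e g := by
  constructor
  · intro hl α β γ h₁ h₂ h₃
    have sq : CommSq (pushout.desc α β h₁) (T.leibnizTensor f e) g γ := by
      constructor
      unfold leibnizTensor
      apply pushout.hom_ext
      · simp only [pushout.inl_desc_assoc, h₂]
      · simp only [pushout.inr_desc_assoc, h₃]
    have hl := sq.fac_left
    refine ⟨sq.lift, ?_, ?_, sq.fac_right⟩
    · simpa only [leibnizTensor, pushout.inl_desc_assoc, pushout.inl_desc] using
        congrArg (fun t => pushout.inl _ _ ≫ t) hl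
    · simpa only [leibnizTensor, pushout.inr_desc_assoc, pushout.inr_desc] using
        congrArg (fun t => pushout.inr _ _ ≫ t) hl
  · intro hc
    refine ⟨fun {u v} sq => ?_⟩
    have hi := congrArg (fun t => pushout.inl _ _ ≫ t) sq.w
    have hr := congrArg (fun t => pushout.inr _ _ ≫ t) sq.w
    simp only [leibnizTensor, pushout.inl_desc_assoc] at hi
    simp only [leibnizTensor, pushout.inr_desc_assoc] at hr
    obtain ⟨δ, h₁, h₂, h₃⟩ := hc (pushout.inl _ _ ≫ u) (pushout.inr _ _ ≫ u) v
      (by rw [pushout.condition_assoc]) (by rw [assoc, hi]) (by rw [assoc, hr])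
    refine ⟨⟨⟨δ, ?_, h₃⟩⟩⟩
    unfold leibnizTensor
    apply pushout.hom_ext
    · rw [pushout.inl_desc_assoc, h₁]
    · rw [pushout.inr_desc_assoc, h₂]

end THC

section LiftingClasses

universe w v u

variable {C : Type u} [Category.{v} C]

lemma isSaturated_llp (P : MorphismProperty C) : IsSaturated.{w} P.llp where
  of_isIso f _ := P.llp_of_isIso f
  comp_mem f g hf hg := P.llp.comp_mem f g hf hg
  retract_mem f g := by
    rintro ⟨i, r, j, s, hi, hj, hij, hrs⟩ hg
    let ρ : RetractArrow f g :=
      { i := Arrow.homMk i j hij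
        r := Arrow.homMk r s hrs.symm
        retract := by ext <;> simpa }
    exact P.llp.of_retract ρ hg
  pushout_mem f t f' b sq hf := P.llp.of_isPushout sq hf
  transfinite := by
    intro J _ _ _ _ F c hc hsucc hlim
    -- `coconeAt F j` is definitionally the cocone in Mathlib's notion of continuity at `j`.
    have : F.IsWellOrderContinuous := ⟨fun j hj => hlim j hj⟩
    exact P.llp.transfiniteCompositionsOfShape_le J _
      ⟨{ F := F
         isoBot := Iso.refl _
         incl := c.ι
         isColimit := hc
         map_mem := hsucc }⟩

lemma isSaturated_hasLiftingProperty {X Y : C} (p : X ⟶ Y) :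
    IsSaturated.{w} (fun _ _ f => HasLiftingProperty f p : MorphismProperty C) := by
  have : (fun _ _ f => HasLiftingProperty f p : MorphismProperty C) =
      (MorphismProperty.ofHoms (fun _ : Unit => p)).llp := by
    ext A B f
    exact (MorphismProperty.llp_ofHoms_iff_hasLiftingProperty Unit f p).symm
  rw [this]
  exact isSaturated_llp _

lemma hasLiftingProperty_of_saturation {A : MorphismProperty C} {X Y : C} {p : X ⟶ Y}
    (hA : ∀ {V W : C} (f : V ⟶ W), A f → HasLiftingProperty f p)
    {V W : C} {f : V ⟶ W} (hf : saturation.{w} A f) : HasLiftingProperty f p :=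
  hf _ (isSaturated_hasLiftingProperty p) (fun _ _ f hf => hA f hf)

lemma hasLiftingProperty_of_cosaturation {A : MorphismProperty C} {X Y : C} {i : X ⟶ Y}
    (hA : ∀ {V W : C} (g : V ⟶ W), A g → HasLiftingProperty i g)
    {V W : C} {g : V ⟶ W} (hg : cosaturation.{w} A g) : HasLiftingProperty i g := by
  refine hg (fun _ _ g => HasLiftingProperty i g) ?_ (fun _ _ g hg => hA g hg)
  have : MorphismProperty.op (fun _ _ g => HasLiftingProperty i g : MorphismProperty C) =
      fun _ _ g => HasLiftingProperty g i.op := by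
    ext A B g
    exact HasLiftingProperty.iff_op
  unfold IsCosaturated
  rw [this]
  exact isSaturated_hasLiftingProperty i.op

end LiftingClasses

/-- Let `(E_S, M_S)` be a weak factorization system on `𝕊`. If the
Leibniz cotensor `⦅f,g⦆` belongs to `M_S` for all `f ∈ 𝒜` and `g ∈ ℬ`, then `⦅f,g⦆`
belongs to `M_S` for all `f` in the saturated closure `𝒜ˢ` and all `g` in the
cosaturated closure `ˢℬ`. -/
theorem thc_wfs_saturation_cotensor {𝔸 : Type u₁} {𝕊 : Type u₂} {𝔹 : Type u₃}
    [Category.{v₁} 𝔸] [Category.{v₂} 𝕊] [Category.{v₃} 𝔹]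
    (T : THC 𝔸 𝕊 𝔹) [HasPushouts 𝔹] [HasLimits 𝔹] [HasPullbacks 𝕊]
    [HasColimits 𝔸] [HasPullbacks 𝔸]
    (E_S M_S : MorphismProperty 𝕊) (hwfs : IsWFS E_S M_S)
    (𝒜 : MorphismProperty 𝔸) (ℬ : MorphismProperty 𝔹)
    (h : ∀ {A B : 𝔸} (f : A ⟶ B) {X Y : 𝔹} (g : X ⟶ Y),
      𝒜 f → ℬ g → M_S (T.leibnizCotensor f g)) :
    ∀ {A B : 𝔸} (f : A ⟶ B) {X Y : 𝔹} (g : X ⟶ Y),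
      saturation.{w₁} 𝒜 f → cosaturation.{w₂} ℬ g → M_S (T.leibnizCotensor f g) := by
  intro A B f X Y g hf hg
  refine (hwfs.right_iff _).2 fun {V W} e he => ?_
  rw [T.hasLiftingProperty_leibnizCotensor_iff, ← T.hasLiftingProperty_leibnizTensor_iff]
  refine hasLiftingProperty_of_cosaturation (fun {X' Y'} g' hg' => ?_) hg
  rw [T.hasLiftingProperty_leibnizTensor_iff, ← T.hasLiftingProperty_leibnizHom_iff]
  refine hasLiftingProperty_of_saturation (fun {A' B'} f' hf' => ?_) hf
  rw [T.hasLiftingProperty_leibnizHom_iff, ← T.hasLiftingProperty_leibnizCotensor_iff]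
  exact (hwfs.right_iff _).1 (h f' g' hf' hg') e he
end
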